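/- Let n ≥ 2 be an integer and let p = 2m + 1 ≥ 3 be an odd integer. Then for every k ≥ 0, gcd(s_k(n), s_m(n)) = 1 if and only if gcd(m − k, p) = 1 (where m − k is taken as an integer). -/

import Mathlib

/-!
With `n = x + x⁻¹`, the number `s_k(n)` is `(x^(2k+1) - 1) / (x^k (x - 1))`; read this way it makes
sense for every integer `k`, and satisfies `s_{k+2m+1} - s_k = C_{m+k+1} s_m` for the rescaled
Chebyshev polynomials `C` of the first kind. So modulo an ideal that contains `s_m` the sequence has
period `2m + 1`. Modulo `(s_k, s_m)` it therefore has period `2j + 1 := gcd(2k+1, 2m+1)`, and as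
`m ≡ j` modulo this period, `s_j ≡ s_m ≡ 0`. Conversely, modulo `s_j` the sequence has period
`2j + 1`, so `s_k` and `s_m` vanish with `s_j`. Hence `gcd(s_k, s_m) = |s_j|`; outside the bounded
cases `-2 ≤ n ≤ 1`, `|s_j|` increases strictly from `|s_0| = 1`, so it is `1` only for `j = 0`.
-/

/-- The sequence `s_k(n)`: `s_0 = 1`, `s_1 = n + 1`, `s_{k+2} = n·s_{k+1} − s_k`. -/
def s (n : ℤ) : ℕ → ℤ
  | 0 => 1
  | 1 => n + 1
  | k + 2 => n * s n (k + 1) - s n k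

/-- The sequence `r_k(n)`: `r_0 = 1`, `r_1 = n − 1`, `r_{k+2} = n·r_{k+1} − r_k`. -/
def r (n : ℤ) : ℕ → ℤ
  | 0 => 1
  | 1 => n - 1
  | k + 2 => n * r n (k + 1) - r n k

/-- Dilated Chebyshev polynomials of the first kind: `T_0 = 2`, `T_1 = n`. -/
def T (n : ℤ) : ℕ → ℤ
  | 0 => 2
  | 1 => n
  | k + 2 => n * T n (k + 1) - T n k

/-- Dilated Chebyshev polynomials of the second kind: `U_0 = 1`, `U_1 = n`. -/
def U (n : ℤ) : ℕ → ℤ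
  | 0 => 1
  | 1 => n
  | k + 2 => n * U n (k + 1) - U n k

open Polynomial

theorem gcd_sub_two_mul_add_one (k m : ℤ) :
    Int.gcd (m - k) (2 * m + 1) = Int.gcd (2 * k + 1) (2 * m + 1) := by
  have two_coprime : Int.gcd 2 (2 * m + 1) = 1 :=
    Int.isCoprime_iff_gcd_eq_one.mp ⟨-m, 1, by ring⟩
  have shift : 2 * k + 1 = -(2 * (m - k)) + (2 * m + 1) * 1 := by ring
  rw [shift, Int.gcd_add_mul_left_left, Int.neg_gcd,
    Int.gcd_mul_right_left_of_gcd_eq_one two_coprime]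

section Periodic

variable {α : Type*} {f : ℤ → α}

theorem periodic_int_gcd {a b : ℤ} (ha : Function.Periodic f a) (hb : Function.Periodic f b) :
    Function.Periodic f (Int.gcd a b) := by
  rw [Int.gcd_eq_gcd_ab, mul_comm a, mul_comm b]
  exact (ha.int_mul _).add_period (hb.int_mul _)

theorem periodic_eq_of_odd_dvd_odd {j m : ℤ} (hf : Function.Periodic f (2 * j + 1))
    (h : 2 * j + 1 ∣ 2 * m + 1) : f m = f j := by
  have two_coprime : IsCoprime (2 * j + 1) 2 := ⟨1, -j, by ring⟩
  obtain ⟨c, hc⟩ : 2 * j + 1 ∣ m - j :=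
    two_coprime.dvd_of_dvd_mul_left (by simpa [mul_sub] using dvd_sub_self_right.mpr h)
  rw [show m = j + c * (2 * j + 1) by linear_combination hc]
  exact hf.int_mul c j

end Periodic

section ChebyshevW

variable (R : Type*) [CommRing R]

theorem chebyshevC_mul_chebyshevS (i d : ℤ) :
    Chebyshev.C R i * Chebyshev.S R d = Chebyshev.S R (d + i) + Chebyshev.S R (d - i) := by
  induction i using Chebyshev.induct with
  | zero => simp [two_mul]
  | one => rw [Chebyshev.C_one, Chebyshev.S_add_one]; ring
  | add_two i ih₁ ih₀ =>
    have hC := Chebyshev.C_add_two R i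
    have hS := Chebyshev.S_add_two R (d + i)
    have hS' := Chebyshev.S_sub_two R (d - i)
    linear_combination (norm := ring_nf)
      Chebyshev.S R d * hC - hS - hS' + (X : R[X]) * ih₁ - ih₀
  | neg_add_one i ih₀ ih₁ =>
    have hC := Chebyshev.C_sub_one R (-i)
    have hS := Chebyshev.S_sub_one R (d - i)
    have hS' := Chebyshev.S_add_one R (d + i)
    linear_combination (norm := ring_nf)
      Chebyshev.S R d * hC - hS - hS' + (X : R[X]) * ih₀ - ih₁

/-- The rescaled Chebyshev polynomials of the fourth kind,
`W_k(2 cos θ) = sin ((k + 1/2) θ) / sin (θ / 2)`. They extend the sequence `s_k(n) = W_k(n)` to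
negative indices, which makes its periodicity modulo ideals a statement about functions on `ℤ`. -/
noncomputable def chebyshevW (k : ℤ) : R[X] :=
  Chebyshev.S R k + Chebyshev.S R (k - 1)

theorem chebyshevW_add_two (k : ℤ) :
    chebyshevW R (k + 2) = X * chebyshevW R (k + 1) - chebyshevW R k := by
  have hS := Chebyshev.S_add_two R k
  have hS' := Chebyshev.S_add_one R k
  simp only [chebyshevW]
  linear_combination (norm := ring_nf) hS + hS'

theorem chebyshevW_neg_sub_one (k : ℤ) : chebyshevW R (-k - 1) = -chebyshevW R k := by
  rw [chebyshevW, chebyshevW, Chebyshev.S_neg_sub_one, show -k - 1 - 1 = -k - 2 by ring,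
    Chebyshev.S_neg_sub_two]
  ring

theorem chebyshevC_mul_chebyshevW (i d : ℤ) :
    Chebyshev.C R i * chebyshevW R d = chebyshevW R (d + i) + chebyshevW R (d - i) := by
  simp only [chebyshevW, mul_add, chebyshevC_mul_chebyshevS]
  ring_nf

theorem chebyshevW_add_sub_self (k m : ℤ) :
    chebyshevW R (k + (2 * m + 1)) - chebyshevW R k =
      Chebyshev.C R (m + k + 1) * chebyshevW R m := by
  rw [chebyshevC_mul_chebyshevW, show m - (m + k + 1) = -k - 1 by ring, chebyshevW_neg_sub_one]
  ring_nf

variable {R}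

theorem periodic_chebyshevW_mod {I : Ideal R[X]} {m : ℤ} (hm : chebyshevW R m ∈ I) :
    Function.Periodic (fun k ↦ Ideal.Quotient.mk I (chebyshevW R k)) (2 * m + 1) := fun k ↦ by
  rw [Ideal.Quotient.eq, chebyshevW_add_sub_self]
  exact I.mul_mem_left _ hm

theorem chebyshevW_dvd_chebyshevW {j m : ℤ} (h : 2 * j + 1 ∣ 2 * m + 1) :
    chebyshevW R j ∣ chebyshevW R m := by
  have hj : chebyshevW R j ∈ Ideal.span {chebyshevW R j} := Ideal.mem_span_singleton_self _
  rw [← Ideal.mem_span_singleton, ← Ideal.Quotient.eq_zero_iff_mem,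
    periodic_eq_of_odd_dvd_odd (periodic_chebyshevW_mod hj) h]
  exact Ideal.Quotient.eq_zero_iff_mem.mpr hj

theorem span_pair_chebyshevW {j k m : ℤ} (h : Int.gcd (2 * k + 1) (2 * m + 1) = 2 * j + 1) :
    Ideal.span {chebyshevW R k, chebyshevW R m} = Ideal.span {chebyshevW R j} := by
  apply le_antisymm
  · rw [Ideal.span_le, Set.pair_subset_iff]
    constructor <;> refine Ideal.mem_span_singleton.mpr (chebyshevW_dvd_chebyshevW ?_)
    · exact h ▸ Int.gcd_dvd_left _ _
    · exact h ▸ Int.gcd_dvd_right _ _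
  · set I := Ideal.span {chebyshevW R k, chebyshevW R m}
    have hk : chebyshevW R k ∈ I := Ideal.subset_span (by simp)
    have hm : chebyshevW R m ∈ I := Ideal.subset_span (by simp)
    have periodic_I := periodic_int_gcd (periodic_chebyshevW_mod hk) (periodic_chebyshevW_mod hm)
    rw [h] at periodic_I
    rw [Ideal.span_singleton_le_iff_mem, ← Ideal.Quotient.eq_zero_iff_mem,
      ← periodic_eq_of_odd_dvd_odd periodic_I (h ▸ Int.gcd_dvd_right _ _)]
    exact Ideal.Quotient.eq_zero_iff_mem.mpr hm

end ChebyshevW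

theorem eval_chebyshevW (n : ℤ) (k : ℕ) : (chebyshevW ℤ k).eval n = s n k := by
  induction k using Nat.twoStepInduction with
  | zero => simp [chebyshevW, s]
  | one => simp [chebyshevW, s]
  | more k ih₀ ih₁ =>
    push_cast at ih₁ ⊢
    rw [chebyshevW_add_two, eval_sub, eval_mul, eval_X, ih₀, ih₁, s]

theorem gcd_s (n : ℤ) {j k m : ℕ} (h : Int.gcd (2 * k + 1) (2 * m + 1) = 2 * j + 1) :
    Int.gcd (s n k) (s n m) = (s n j).natAbs := by
  have gcd_eq : (Int.gcd (2 * k + 1) (2 * m + 1) : ℤ) = 2 * j + 1 := mod_cast h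
  have span_eq : Ideal.span {s n k, s n m} = Ideal.span {s n j} := by
    simpa only [Ideal.map_span, Set.image_pair, Set.image_singleton, coe_evalRingHom,
      eval_chebyshevW] using
      congrArg (Ideal.map (evalRingHom n)) (span_pair_chebyshevW (R := ℤ) gcd_eq)
  rw [← span_gcd, ← Int.coe_gcd, Ideal.span_singleton_eq_span_singleton,
    Int.associated_iff_natAbs] at span_eq
  exact span_eq

theorem strictMono_abs_s {n : ℤ} (hn : 1 < |n|) (hn' : n ≠ -2) : StrictMono fun k ↦ |s n k| := by
  refine strictMono_nat_of_lt_succ fun k ↦ ?_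
  induction k with
  | zero => simp only [s]; grind
  | succ k ih =>
    calc |s n (k + 1)| < 2 * |s n (k + 1)| - |s n k| := by linarith
      _ ≤ |n| * |s n (k + 1)| - |s n k| := by gcongr; exact hn
      _ ≤ |n * s n (k + 1) - s n k| := by rw [← abs_mul]; exact abs_sub_abs_le_abs_sub _ _

theorem natAbs_s_eq_one_iff {n : ℤ} (hn : 1 < |n|) (hn' : n ≠ -2) {j : ℕ} :
    (s n j).natAbs = 1 ↔ j = 0 := by
  have abs_s_eq_one_iff : |s n j| = 1 ↔ j = 0 :=
    (strictMono_abs_s hn hn').injective.eq_iff' (by simp [s])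
  rw [← abs_s_eq_one_iff, Int.abs_eq_natAbs, Nat.cast_eq_one]

theorem s_coprimality_general {n : ℤ} (hn : 1 < |n|) (hn' : n ≠ -2) (m k : ℕ) :
    Int.gcd (s n k) (s n m) = 1 ↔ Int.gcd ((m : ℤ) - (k : ℤ)) (2 * (m : ℤ) + 1) = 1 := by
  obtain ⟨j, hj⟩ : Odd (Int.gcd (2 * k + 1) (2 * m + 1)) :=
    Odd.of_dvd_nat (odd_two_mul_add_one m) (mod_cast Int.gcd_dvd_right (2 * k + 1) (2 * m + 1))
  rw [gcd_s n hj, natAbs_s_eq_one_iff hn hn', gcd_sub_two_mul_add_one, hj]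
  omega

theorem s_coprimality (n : ℤ) (hn : 2 ≤ n) (m : ℕ) (hm : 1 ≤ m) (k : ℕ) :
    Int.gcd (s n k) (s n m) = 1 ↔ Int.gcd ((m : ℤ) - (k : ℤ)) (2 * (m : ℤ) + 1) = 1 :=
  s_coprimality_general (by grind) (by grind) m k
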